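/- Let an ARC(D,T) task class satisfy the strengthened identifiability assumption with margin r > 0 against the hypothesis classes, and suppose |P_{Ξ_t}| ≤ H for all t ∈ {1,…,T}. Then for any single task f_θ = (P_{θ₁},…,P_{θ_T}) of the class there exists a procedure which, given n_x i.i.d. samples from the joint distribution P_θ, outputs a tuple (P̂₁,…,P̂_T) with P̂_t ∈ P_{Ξ_t} for each t, such that Pr[(P̂₁,…,P̂_T) ≠ (P_{θ₁},…,P_{θ_T})] ≤ T·H·e^{−r²·n_x/2}. -/

import Mathlib

/-!
The procedure is stepwise maximum likelihood: at step `t` it returns a hypothesis `ζ ∈ Ξ t`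
maximising `∏ j, ζ (y_t | x, y_{<t})` over the sample. It does not depend on the unknown task, so
the bound is proved uniformly in the task (`exists_uniform_estimator`), which is stronger than the
quantifier order of `stmt11`, where a task is fixed before the procedure is chosen.

If the procedure errs at step `t`, some `ζ ≠ θ_t` in `Ξ t` has likelihood at least that of `θ_t`.
On that event the density of the sample is at most the same density with `θ_t` replaced by
`√(θ_t ζ)`, and summing over all samples gives the `nx`-th power of the Bhattacharyya coefficient
of the partial joints `P_{θ_{1:t}}` and `P_{θ_{1:t-1}, ζ}`; the later steps integrate out
(`sum_seqJoint_of_le`). By Cauchy–Schwarz this coefficient is at most `√(1 - TV²) ≤ exp (-r²/2)`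
(`sum_sqrt_le_exp`). A union bound over the `T` steps and at most `H` hypotheses per step
concludes.
-/

open Finset Filter

noncomputable section

/-- `P` is a probability distribution on the finite set `S`. -/
def IsPMF {S : Type*} [Fintype S] (P : S → ℝ) : Prop :=
  (∀ s, 0 ≤ P s) ∧ ∑ s, P s = 1

/-- Total variation distance between two distributions on a finite set. -/
def TV {S : Type*} [Fintype S] (P Q : S → ℝ) : ℝ :=
  (1 / 2) * ∑ s, |P s - Q s|

/-- A conditional distribution at step `t`: it maps an input `x ∈ X` and a
history `y_{<t} ∈ Y^t` to a (density of a) distribution on `Y`. -/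
abbrev Cond (X Y : Type*) (t : ℕ) : Type _ := X → (Fin t → Y) → Y → ℝ

/-- The joint density on `X × Y^t` obtained by drawing `x ∼ Px` and then
autoregressively `y_s ∼ φ_s (· | x, y_{<s})` for `s < t`. -/
def prefixJoint {X Y : Type*} {t : ℕ} (Px : X → ℝ)
    (φ : ∀ s : Fin t, Cond X Y s.val) : X × (Fin t → Y) → ℝ :=
  fun p => Px p.1 * ∏ s : Fin t,
    φ s p.1 (fun r => p.2 ⟨r.val, lt_trans r.isLt s.isLt⟩) (p.2 s)

/-- An AutoRegressive Compositional task class `ARC(D,T)`: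
input distribution `Px` on the finite set `X`, and for every step `t < T` a
finite hypothesis class `Ξ t` of step-`t` conditional distributions together
with an injective enumeration `sub t : Fin D → _` of the true subtask family
`Θ t = range (sub t) ⊆ Ξ t` (so `|Θ t| = D`). -/
structure ARC (X Y : Type*) [Fintype X] [Fintype Y] (D T : ℕ) where
  Px : X → ℝ
  hPx : IsPMF Px
  Ξ : ∀ t : Fin T, Set (Cond X Y t.val)
  hΞfin : ∀ t, (Ξ t).Finite
  sub : ∀ t : Fin T, Fin D → Cond X Y t.val
  hsub_inj : ∀ t, Function.Injective (sub t)
  hsubΞ : ∀ t i, sub t i ∈ Ξ t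
  hpmf : ∀ t, ∀ P ∈ Ξ t, ∀ x h, (∀ y, 0 ≤ P x h y) ∧ ∑ y, P x h y = 1

variable {X Y : Type*} [Fintype X] [Fintype Y] {D T : ℕ}

/-- The task `f_θ = (P_{θ_1},…,P_{θ_T})` indexed by `η ∈ {1,…,D}^T`. -/
def ARC.task (A : ARC X Y D T) (η : Fin T → Fin D) :
    ∀ t : Fin T, Cond X Y t.val :=
  fun t => A.sub t (η t)

/-- The joint distribution `P_θ` on `X × Y^T` induced by the task indexed by `η`. -/
def ARC.joint (A : ARC X Y D T) (η : Fin T → Fin D) : X × (Fin T → Y) → ℝ :=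
  prefixJoint A.Px (A.task η)

/-- The partial joint distribution `P_{θ_{1:t-1}, ζ_t}` on `X × Y^t` induced by a
prefix of true subtasks (indexed by `η`) followed by the conditional `ζ` at
step `t`. -/
def ARC.stepJoint (A : ARC X Y D T) (t : Fin T) (η : Fin t.val → Fin D)
    (ζ : Cond X Y t.val) : X × (Fin (t.val + 1) → Y) → ℝ :=
  prefixJoint A.Px
    (Fin.snoc (α := fun j : Fin (t.val + 1) => Cond X Y j.val)
      (fun s : Fin t.val => A.sub ⟨s.val, lt_trans s.isLt t.isLt⟩ (η s)) ζ)

/-- The identifiability assumption with constant `c > 0`. -/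
def Identifiable (A : ARC X Y D T) (c : ℝ) : Prop :=
  ∀ t : Fin T, ∀ η : Fin t.val → Fin D,
    (∀ i : Fin D, ∀ ζ ∈ A.Ξ t, ζ ≠ A.sub t i →
      0 < TV (A.stepJoint t η (A.sub t i)) (A.stepJoint t η ζ)) ∧
    (∀ i j : Fin D, i ≠ j →
      c ≤ TV (A.stepJoint t η (A.sub t i)) (A.stepJoint t η (A.sub t j)))

/-- Probability that the learner `L` fails to output exactly the tuple of true
conditionals of the target task `tgt`, where the `nθ` training tasks are drawn
i.i.d. uniformly from the `D^T` tasks, each training task comes with `nx`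
i.i.d. demonstration samples from its joint distribution, and `ℓ` i.i.d.
inference-time demonstration samples are drawn from the target task. -/
def failProb (A : ARC X Y D T) (nθ nx ℓ : ℕ) (tgt : Fin T → Fin D)
    (L : (Fin nθ → Fin nx → X × (Fin T → Y)) → (Fin ℓ → X × (Fin T → Y)) →
      ∀ t : Fin T, Cond X Y t.val) : ℝ :=
  ∑ ω : (Fin nθ → Fin T → Fin D) × (Fin nθ → Fin nx → X × (Fin T → Y)) ×
      (Fin ℓ → X × (Fin T → Y)),
    Set.indicator {ω' | L ω'.2.1 ω'.2.2 ≠ A.task tgt}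
      (fun ω' => (1 / (D : ℝ) ^ T) ^ nθ *
        (∏ i, ∏ j, A.joint (ω'.1 i) (ω'.2.1 i j)) *
        ∏ l, A.joint tgt (ω'.2.2 l)) ω


/-- The margin assumption: a total-variation margin `r > 0` separates each true
subtask from every other hypothesis in the hypothesis class, after any prefix
of true subtasks. -/
def MarginAssumption (A : ARC X Y D T) (r : ℝ) : Prop :=
  ∀ t : Fin T, ∀ η : Fin t.val → Fin D, ∀ i : Fin D, ∀ ζ ∈ A.Ξ t,
    ζ ≠ A.sub t i →
      r ≤ TV (A.stepJoint t η (A.sub t i)) (A.stepJoint t η ζ)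

/-- Probability, over `nx` i.i.d. samples from the joint distribution of the
task indexed by `η`, that the estimation procedure `est` fails to output
exactly the tuple of true conditionals of that task. -/
def trainFailProb (A : ARC X Y D T) (nx : ℕ) (η : Fin T → Fin D)
    (est : (Fin nx → X × (Fin T → Y)) → ∀ t : Fin T, Cond X Y t.val) : ℝ :=
  ∑ ω : Fin nx → X × (Fin T → Y),
    Set.indicator {ω' | est ω' ≠ A.task η}
      (fun ω' => ∏ j, A.joint η (ω' j)) ω

/-- The Cauchy–Schwarz bound `√(1 - TV²)` on the Bhattacharyya coefficient, followed by
`1 - r² ≤ exp (-r²)`. -/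
theorem sum_sqrt_le_exp {S : Type*} [Fintype S] {P Q : S → ℝ} (hP : IsPMF P) (hQ : IsPMF Q)
    {r : ℝ} (hr : 0 < r) (h : r ≤ TV P Q) :
    ∑ s, √(P s * Q s) ≤ Real.exp (-r ^ 2 / 2) := by
  set B := ∑ s, √(P s * Q s) with hB
  have hsqP (s : S) : √(P s) ^ 2 = P s := Real.sq_sqrt (hP.1 s)
  have hsqQ (s : S) : √(Q s) ^ 2 = Q s := Real.sq_sqrt (hQ.1 s)
  have hmul (s : S) : √(P s * Q s) = √(P s) * √(Q s) := Real.sqrt_mul (hP.1 s) _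
  have hminus : ∑ s, |√(P s) - √(Q s)| ^ 2 = 2 - 2 * B := by
    have e (s : S) : |√(P s) - √(Q s)| ^ 2 = P s + Q s - 2 * √(P s * Q s) := by
      rw [sq_abs, hmul, ← hsqP s, ← hsqQ s]
      simp only [Real.sqrt_sq (Real.sqrt_nonneg _)]
      ring
    simp only [e, sum_sub_distrib, sum_add_distrib, ← mul_sum, hP.2, hQ.2]
    ring
  have hplus : ∑ s, |√(P s) + √(Q s)| ^ 2 = 2 + 2 * B := by
    have e (s : S) : |√(P s) + √(Q s)| ^ 2 = P s + Q s + 2 * √(P s * Q s) := by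
      rw [sq_abs, hmul, ← hsqP s, ← hsqQ s]
      simp only [Real.sqrt_sq (Real.sqrt_nonneg _)]
      ring
    simp only [e, sum_add_distrib, ← mul_sum, hP.2, hQ.2]
    ring
  have hTV : ∑ s, |P s - Q s| = ∑ s, |√(P s) - √(Q s)| * |√(P s) + √(Q s)| := by
    refine sum_congr rfl fun s _ => ?_
    rw [← abs_mul]
    congr 1
    linear_combination -(hsqP s) + hsqQ s
  have hCS := sum_mul_sq_le_sq_mul_sq univ (fun s => |√(P s) - √(Q s)|)
    (fun s => |√(P s) + √(Q s)|)
  rw [← hTV, hminus, hplus] at hCS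
  have h2 : 2 * r ≤ ∑ s, |P s - Q s| := by
    unfold TV at h
    linarith
  have hB2 : B ^ 2 ≤ 1 - r ^ 2 := by nlinarith
  have hexp : 1 - r ^ 2 ≤ Real.exp (-r ^ 2 / 2) ^ 2 := by
    rw [← Real.exp_nat_mul]
    have := Real.add_one_le_exp (-r ^ 2)
    calc 1 - r ^ 2 ≤ Real.exp (-r ^ 2) := by linarith
      _ = _ := by congr 1; push_cast; ring
  exact (abs_le_of_sq_le_sq' (hB2.trans hexp) (Real.exp_pos _).le).2

/-- The joint density of the first `n` steps of an infinite sequence of conditionals. Indexing the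
conditionals by `ℕ` lets partial joints of different lengths share the same sequence. The
conditionals need not be normalised. -/
def seqJoint (Px : X → ℝ) (φ : ∀ s : ℕ, Cond X Y s) (n : ℕ) : X × (Fin n → Y) → ℝ :=
  prefixJoint Px (fun s : Fin n => φ s.val)

/-- The value `w (y_t | x, y_{<t})` read off from a trajectory of length `n > t`. -/
def stepVal {t n : ℕ} (h : t < n) (w : Cond X Y t) (p : X × (Fin n → Y)) : ℝ :=
  w p.1 (fun r => p.2 ⟨r.val, lt_trans r.isLt h⟩) (p.2 ⟨t, h⟩)

theorem seqJoint_nonneg {Px : X → ℝ} (hPx : ∀ x, 0 ≤ Px x) {φ : ∀ s : ℕ, Cond X Y s} {n : ℕ}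
    (hφ : ∀ s < n, ∀ x h y, 0 ≤ φ s x h y) (p : X × (Fin n → Y)) : 0 ≤ seqJoint Px φ n p :=
  mul_nonneg (hPx _) (prod_nonneg fun s _ => hφ s s.isLt _ _ _)

/-- The step-`t` conditional enters the joint density as one factor; the remaining factors are the
density with step `t` replaced by the constant `1`. -/
theorem seqJoint_update {Px : X → ℝ} (φ : ∀ s : ℕ, Cond X Y s) {t n : ℕ} (h : t < n)
    (w : Cond X Y t) (p : X × (Fin n → Y)) :
    seqJoint Px (Function.update φ t w) n p =
      seqJoint Px (Function.update φ t fun _ _ _ => 1) n p * stepVal h w p := by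
  unfold seqJoint prefixJoint stepVal
  rw [← mul_prod_erase univ _ (mem_univ (⟨t, h⟩ : Fin n)),
    ← mul_prod_erase univ (fun s : Fin n => Function.update φ t (fun _ _ _ => 1) s.val p.1
      (fun r => p.2 ⟨r.val, lt_trans r.isLt s.isLt⟩) (p.2 s)) (mem_univ (⟨t, h⟩ : Fin n))]
  simp only [Function.update_self]
  have e : ∀ s ∈ univ.erase (⟨t, h⟩ : Fin n),
      Function.update φ t w s.val p.1 (fun r => p.2 ⟨r.val, lt_trans r.isLt s.isLt⟩) (p.2 s) =
      Function.update φ t (fun _ _ _ => 1) s.val p.1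
        (fun r => p.2 ⟨r.val, lt_trans r.isLt s.isLt⟩) (p.2 s) := by
    intro s hs
    have hne : s.val ≠ t := fun hst => (mem_erase.1 hs).1 (Fin.ext hst)
    rw [Function.update_of_ne hne, Function.update_of_ne hne]
  rw [prod_congr rfl e]
  ring

/-- Summing out the last step. -/
theorem sum_seqJoint_succ (Px : X → ℝ) (φ : ∀ s : ℕ, Cond X Y s) (n : ℕ)
    (hφ : ∀ x h, ∑ y, φ n x h y = 1) :
    ∑ p, seqJoint Px φ (n + 1) p = ∑ p, seqJoint Px φ n p := by
  rw [Fintype.sum_prod_type, Fintype.sum_prod_type]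
  refine sum_congr rfl fun x _ => ?_
  rw [← (Fin.snocEquiv fun _ : Fin (n + 1) => Y).sum_comp, Fintype.sum_prod_type, sum_comm]
  refine sum_congr rfl fun h _ => ?_
  have e (y : Y) : seqJoint Px φ (n + 1) (x, Fin.snocEquiv (fun _ => Y) (y, h)) =
      seqJoint Px φ n (x, h) * φ n x h y := by
    unfold seqJoint prefixJoint
    rw [Fin.prod_univ_castSucc, mul_assoc]
    have hc (k : ℕ) (hk : k < n) (hk' : k < n + 1) :
        (Fin.snoc h y : Fin (n + 1) → Y) ⟨k, hk'⟩ = h ⟨k, hk⟩ :=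
      Fin.snoc_castSucc (α := fun _ => Y) y h ⟨k, hk⟩
    have hl : (Fin.snoc h y : Fin (n + 1) → Y) (Fin.last n) = y :=
      Fin.snoc_last (α := fun _ => Y) y h
    have hc' (s : Fin n) : (Fin.snoc h y : Fin (n + 1) → Y) s.castSucc = h s :=
      Fin.snoc_castSucc (α := fun _ => Y) y h s
    simp only [Fin.snocEquiv_apply, hl, hc', Fin.val_last, Fin.val_castSucc]
    congr 2
    · refine prod_congr rfl fun s _ => ?_
      congr 1
      funext r
      exact hc r.val (lt_trans r.isLt s.isLt) _
    · congr 1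
      funext r
      exact hc r.val r.isLt _
  simp only [e, ← mul_sum, hφ, mul_one]

theorem sum_seqJoint_of_le (Px : X → ℝ) (φ : ∀ s : ℕ, Cond X Y s) {m n : ℕ} (hmn : m ≤ n)
    (hφ : ∀ k, m ≤ k → k < n → ∀ x h, ∑ y, φ k x h y = 1) :
    ∑ p, seqJoint Px φ n p = ∑ p, seqJoint Px φ m p := by
  induction n, hmn using Nat.le_induction with
  | base => rfl
  | succ n hmn ih =>
    rw [sum_seqJoint_succ Px φ n (hφ n hmn n.lt_succ_self)]
    exact ih fun k hk hkn => hφ k hk (hkn.trans n.lt_succ_self)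

theorem isPMF_seqJoint {Px : X → ℝ} (hPx : IsPMF Px) {φ : ∀ s : ℕ, Cond X Y s} {n : ℕ}
    (hφ : ∀ s < n, ∀ x h, (∀ y, 0 ≤ φ s x h y) ∧ ∑ y, φ s x h y = 1) :
    IsPMF (seqJoint Px φ n) := by
  refine ⟨seqJoint_nonneg hPx.1 fun s hs x h y => (hφ s hs x h).1 y, ?_⟩
  rw [sum_seqJoint_of_le Px φ (Nat.zero_le n) fun k _ hk x h => (hφ k hk x h).2,
    Fintype.sum_prod_type, ← hPx.2]
  refine sum_congr rfl fun x _ => ?_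
  simp [seqJoint, prefixJoint]

/-- The conditionals of a task, continued by `0` beyond step `T`. -/
def ARC.seq (A : ARC X Y D T) (η : Fin T → Fin D) : ∀ s : ℕ, Cond X Y s :=
  fun s => if h : s < T then A.task η ⟨s, h⟩ else fun _ _ _ => 0

theorem ARC.seq_val (A : ARC X Y D T) (η : Fin T → Fin D) (t : Fin T) :
    A.seq η t.val = A.task η t := by
  simp [ARC.seq]

theorem ARC.joint_eq (A : ARC X Y D T) (η : Fin T → Fin D) :
    A.joint η = seqJoint A.Px (A.seq η) T := by
  unfold ARC.joint seqJoint
  congr 1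
  funext t
  exact (A.seq_val η t).symm

theorem ARC.stepJoint_eq (A : ARC X Y D T) (η : Fin T → Fin D) (t : Fin T)
    (ζ : Cond X Y t.val) :
    A.stepJoint t (fun s => η ⟨s.val, lt_trans s.isLt t.isLt⟩) ζ =
      seqJoint A.Px (Function.update (A.seq η) t.val ζ) (t.val + 1) := by
  unfold ARC.stepJoint seqJoint
  congr 1
  funext s
  induction s using Fin.lastCases with
  | last =>
    rw [Fin.snoc_last]
    exact (Function.update_self t.val ζ (A.seq η)).symm
  | cast s =>
    rw [Fin.snoc_castSucc]
    have h1 := Function.update_of_ne s.isLt.ne ζ (A.seq η)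
    have h2 := A.seq_val η ⟨s.val, lt_trans s.isLt t.isLt⟩
    exact (h1.trans h2).symm

theorem ARC.seq_pmf (A : ARC X Y D T) (η : Fin T → Fin D) {s : ℕ} (hs : s < T)
    (x : X) (h : Fin s → Y) :
    (∀ y, 0 ≤ A.seq η s x h y) ∧ ∑ y, A.seq η s x h y = 1 := by
  have e := A.seq_val η ⟨s, hs⟩
  simp only at e
  rw [e]
  exact A.hpmf ⟨s, hs⟩ _ (A.hsubΞ _ _) x h

theorem ARC.isPMF_stepSeq (A : ARC X Y D T) (η : Fin T → Fin D) (t : Fin T)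
    {ζ : Cond X Y t.val} (hζ : ζ ∈ A.Ξ t) :
    IsPMF (seqJoint A.Px (Function.update (A.seq η) t.val ζ) (t.val + 1)) := by
  refine isPMF_seqJoint A.hPx fun s hs => ?_
  by_cases hst : s = t.val
  · subst hst
    rw [Function.update_self]
    exact A.hpmf t ζ hζ
  · rw [Function.update_of_ne hst]
    exact A.seq_pmf η (by omega)

/-- The geometric mean `√(θ ζ)` of two step-`t` conditionals. -/
def geoMean {t : ℕ} (θ ζ : Cond X Y t) : Cond X Y t := fun x h y => √(θ x h y * ζ x h y)

theorem ARC.rest_nonneg (A : ARC X Y D T) (η : Fin T → Fin D) (t : ℕ) {n : ℕ} (hn : n ≤ T)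
    (p : X × (Fin n → Y)) :
    0 ≤ seqJoint A.Px (Function.update (A.seq η) t fun _ _ _ => 1) n p := by
  refine seqJoint_nonneg A.hPx.1 (fun s hs x h y => ?_) p
  by_cases hst : s = t
  · subst hst
    rw [Function.update_self]
    exact zero_le_one
  · rw [Function.update_of_ne hst]
    exact (A.seq_pmf η (hs.trans_le hn) x h).1 y

/-- With `θ_t` replaced by `√(θ_t ζ)`, the total mass of the joint density is the Bhattacharyya
coefficient of the two partial joints, hence is controlled by the margin. -/
theorem ARC.sum_geoMean_le (A : ARC X Y D T) {r : ℝ} (hr : 0 < r) (hm : MarginAssumption A r)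
    (η : Fin T → Fin D) (t : Fin T) {ζ : Cond X Y t.val} (hζ : ζ ∈ A.Ξ t)
    (hne : ζ ≠ A.task η t) :
    ∑ p, seqJoint A.Px (Function.update (A.seq η) t.val (geoMean (A.task η t) ζ)) T p ≤
      Real.exp (-r ^ 2 / 2) := by
  have hTV := hm t (fun s => η ⟨s.val, lt_trans s.isLt t.isLt⟩) (η t) ζ hζ hne
  rw [A.stepJoint_eq, A.stepJoint_eq] at hTV
  refine le_trans (le_of_eq ?_)
    (sum_sqrt_le_exp (A.isPMF_stepSeq η t (A.hsubΞ _ _)) (A.isPMF_stepSeq η t hζ) hr hTV)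
  rw [sum_seqJoint_of_le _ _ (Nat.succ_le_of_lt t.isLt)]
  · refine sum_congr rfl fun p _ => ?_
    have hlt : t.val < t.val + 1 := t.val.lt_succ_self
    rw [seqJoint_update _ hlt (geoMean _ _), seqJoint_update _ hlt (A.sub t (η t)),
      seqJoint_update _ hlt ζ]
    have h0 := A.rest_nonneg η t.val (Nat.succ_le_of_lt t.isLt) p
    rw [mul_mul_mul_comm, Real.sqrt_mul (mul_self_nonneg _), Real.sqrt_mul_self h0]
    rfl
  · intro k hk hkT x h
    rw [Function.update_of_ne (by omega)]
    exact (A.seq_pmf η hkT x h).2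

/-- The likelihood of the step-`t` hypothesis `ζ` on a data set. -/
def likelihood {nx : ℕ} (t : Fin T) (dat : Fin nx → X × (Fin T → Y)) (ζ : Cond X Y t.val) : ℝ :=
  ∏ j, stepVal t.isLt ζ (dat j)

/-- Chernoff-type bound for one competing hypothesis: the probability that `ζ ≠ θ_t` is at least as
likely as `θ_t` on the sample. -/
theorem ARC.prob_likelihood_le (A : ARC X Y D T) {r : ℝ} (hr : 0 < r)
    (hm : MarginAssumption A r) (η : Fin T → Fin D) (nx : ℕ) (t : Fin T)
    {ζ : Cond X Y t.val} (hζ : ζ ∈ A.Ξ t) :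
    ∑ ω : Fin nx → X × (Fin T → Y),
      Set.indicator {ω' | ζ ≠ A.task η t ∧ likelihood t ω' (A.task η t) ≤ likelihood t ω' ζ}
        (fun ω' => ∏ j, A.joint η (ω' j)) ω ≤ Real.exp (-(r ^ 2 * nx) / 2) := by
  by_cases hne : ζ = A.task η t
  · simp [hne, (Real.exp_pos _).le]
  set g := seqJoint A.Px (Function.update (A.seq η) t.val (geoMean (A.task η t) ζ)) T with hg
  set a := seqJoint A.Px (Function.update (A.seq η) t.val fun _ _ _ => 1) T with ha
  have ha0 (p) : 0 ≤ a p := A.rest_nonneg η t.val le_rfl p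
  have hθ0 (p : X × (Fin T → Y)) : 0 ≤ stepVal t.isLt (A.task η t) p :=
    (A.hpmf t _ (A.hsubΞ _ _) _ _).1 _
  have hζ0 (p : X × (Fin T → Y)) : 0 ≤ stepVal t.isLt ζ p := (A.hpmf t _ hζ _ _).1 _
  have hgeq (p) : g p = a p * √(stepVal t.isLt (A.task η t) p * stepVal t.isLt ζ p) :=
    seqJoint_update _ t.isLt _ p
  have hjoint (p) : A.joint η p = a p * stepVal t.isLt (A.task η t) p := by
    rw [A.joint_eq, ← seqJoint_update _ t.isLt, ← A.seq_val η t, Function.update_eq_self]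
  have hg0 (p) : 0 ≤ g p := by
    rw [hgeq]
    exact mul_nonneg (ha0 p) (Real.sqrt_nonneg _)
  calc _ ≤ ∑ ω : Fin nx → X × (Fin T → Y), ∏ j, g (ω j) := by
        refine sum_le_sum fun ω _ => Set.indicator_apply_le' (fun hω => ?_)
          fun _ => prod_nonneg fun j _ => hg0 _
        simp only [hgeq, hjoint, prod_mul_distrib]
        refine mul_le_mul_of_nonneg_left ?_ (prod_nonneg fun j _ => ha0 _)
        rw [← Real.sqrt_prod _ fun j _ => mul_nonneg (hθ0 _) (hζ0 _), prod_mul_distrib]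
        refine Real.le_sqrt_of_sq_le ?_
        rw [sq]
        exact mul_le_mul_of_nonneg_left hω.2 (prod_nonneg fun j _ => hθ0 _)
    _ = (∑ p, g p) ^ nx := by
        rw [← Fintype.piFinset_univ, sum_prod_piFinset univ (fun _ : Fin nx => g)]
        simp
    _ ≤ Real.exp (-r ^ 2 / 2) ^ nx :=
        pow_le_pow_left₀ (sum_nonneg fun p _ => hg0 p) (A.sum_geoMean_le hr hm η t hζ hne) _
    _ = _ := by
        rw [← Real.exp_nat_mul]
        congr 1
        ring

/-- A single procedure, chosen before the task, achieves the bound for every task of the class. -/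
theorem exists_uniform_estimator (hD : 0 < D) (A : ARC X Y D T) (r : ℝ) (hr : 0 < r)
    (hm : MarginAssumption A r) (H : ℕ) (hH : ∀ t, (A.Ξ t).ncard ≤ H) (nx : ℕ) :
    ∃ est : (Fin nx → X × (Fin T → Y)) → ∀ t : Fin T, Cond X Y t.val,
      (∀ dat t, est dat t ∈ A.Ξ t) ∧ ∀ η : Fin T → Fin D,
        trainFailProb A nx η est ≤ (T : ℝ) * H * Real.exp (-(r ^ 2 * nx) / 2) := by
  have hmax (dat : Fin nx → X × (Fin T → Y)) (t : Fin T) :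
      ∃ ζ ∈ A.Ξ t, ∀ ξ ∈ A.Ξ t, likelihood t dat ξ ≤ likelihood t dat ζ :=
    Set.exists_max_image _ _ (A.hΞfin t) ⟨_, A.hsubΞ t ⟨0, hD⟩⟩
  choose est hmem hest using hmax
  refine ⟨est, hmem, fun η => ?_⟩
  set f : (Fin nx → X × (Fin T → Y)) → ℝ := fun ω => ∏ j, A.joint η (ω j) with hf
  have hf0 (ω) : 0 ≤ f ω := prod_nonneg fun j _ => by
    rw [A.joint_eq]
    exact seqJoint_nonneg A.hPx.1 (fun s hs x h y => (A.seq_pmf η hs x h).1 y) _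
  let E (t : Fin T) (ζ : Cond X Y t.val) : Set (Fin nx → X × (Fin T → Y)) :=
    {ω | ζ ≠ A.task η t ∧ likelihood t ω (A.task η t) ≤ likelihood t ω ζ}
  have hE0 (t ζ ω) : 0 ≤ (E t ζ).indicator f ω := Set.indicator_nonneg (fun ω _ => hf0 ω) ω
  have hunion (ω) : Set.indicator {ω' | est ω' ≠ A.task η} f ω ≤
      ∑ t, ∑ ζ ∈ (A.hΞfin t).toFinset, (E t ζ).indicator f ω := by
    refine Set.indicator_apply_le' (fun hω => ?_)
      fun _ => sum_nonneg fun t _ => sum_nonneg fun ζ _ => hE0 t ζ ω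
    obtain ⟨t, ht⟩ := Function.ne_iff.1 hω
    have hin : ω ∈ E t (est ω t) := ⟨ht, hest ω t _ (A.hsubΞ _ _)⟩
    calc f ω = (E t (est ω t)).indicator f ω := (Set.indicator_of_mem hin f).symm
      _ ≤ ∑ ζ ∈ (A.hΞfin t).toFinset, (E t ζ).indicator f ω :=
          single_le_sum (f := fun ζ => (E t ζ).indicator f ω) (fun ζ _ => hE0 t ζ ω)
            ((A.hΞfin t).mem_toFinset.2 (hmem ω t))
      _ ≤ _ := single_le_sum
          (f := fun t => ∑ ζ ∈ (A.hΞfin t).toFinset, (E t ζ).indicator f ω)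
          (fun t _ => sum_nonneg fun ζ _ => hE0 t ζ ω) (mem_univ t)
  calc trainFailProb A nx η est
      ≤ ∑ ω, ∑ t, ∑ ζ ∈ (A.hΞfin t).toFinset, (E t ζ).indicator f ω :=
        sum_le_sum fun ω _ => hunion ω
    _ = ∑ t, ∑ ζ ∈ (A.hΞfin t).toFinset, ∑ ω, (E t ζ).indicator f ω := by
        rw [sum_comm]
        exact sum_congr rfl fun t _ => sum_comm
    _ ≤ ∑ t : Fin T, ∑ ζ ∈ (A.hΞfin t).toFinset, Real.exp (-(r ^ 2 * nx) / 2) :=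
        sum_le_sum fun t _ => sum_le_sum fun ζ hζ =>
          A.prob_likelihood_le hr hm η nx t ((A.hΞfin t).mem_toFinset.1 hζ)
    _ ≤ ∑ _t : Fin T, H * Real.exp (-(r ^ 2 * nx) / 2) := by
        refine sum_le_sum fun t _ => ?_
        rw [sum_const, nsmul_eq_mul, ← Set.ncard_eq_toFinset_card _ (A.hΞfin t)]
        exact mul_le_mul_of_nonneg_right (by exact_mod_cast hH t) (Real.exp_pos _).le
    _ = _ := by
        rw [sum_const, card_univ, Fintype.card_fin, nsmul_eq_mul]
        ring

/-- **Training stage: non-asymptotic identification of a single task.** Under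
the margin assumption with margin `r > 0` and hypothesis classes of size at
most `H`, for any task of the class there is a procedure which, from `nx`
i.i.d. samples of its joint distribution, outputs a tuple of hypotheses (one
per step, each in its hypothesis class) differing from the true tuple
`(P_{θ₁},…,P_{θ_T})` with probability at most `T·H·e^{-r²·nx/2}`. -/
theorem stmt11 {X Y : Type*} [Fintype X] [Fintype Y] {D T : ℕ}
    (hD : 0 < D) (hT : 0 < T)
    (A : ARC X Y D T) (r : ℝ) (hr : 0 < r) (hm : MarginAssumption A r)
    (H : ℕ) (hH : ∀ t, (A.Ξ t).ncard ≤ H)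
    (η : Fin T → Fin D) (nx : ℕ) :
    ∃ est : (Fin nx → X × (Fin T → Y)) → ∀ t : Fin T, Cond X Y t.val,
      (∀ dat t, est dat t ∈ A.Ξ t) ∧
      trainFailProb A nx η est ≤ (T : ℝ) * H * Real.exp (-(r ^ 2 * nx) / 2) := by
  obtain ⟨est, hmem, hest⟩ := exists_uniform_estimator hD A r hr hm H hH nx
  exact ⟨est, hmem, hest η⟩

end
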